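/- arXiv:1304.2328 — 5 statements merged into one kernel-verified Lean document; each statement's English description precedes it below -/
import Mathlib

section
/- For every matrix X ∈ M_n(ℂ), the operator norm satisfies ‖X‖ = inf{ Σ_i |c_i| : X = Σ_i c_i U_i with each U_i ∈ M_n(ℂ) unitary }, where the infimum is taken over all finite decompositions of X as a linear combination of unitary matrices. -/
open scoped Kronecker ComplexOrder
open Matrix

namespace Ent

variable {ι κ : Type*} [Fintype ι] [Fintype κ]

/-- Inner product ⟨v,w⟩ = Σᵢ conj(v i) * (w i) (conjugate-linear in the first argument). -/
noncomputable def vinner (v w : ι → ℂ) : ℂ := dotProduct (star v) w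

/-- An elementary (product) tensor a ⊗ b in ℂ^ι ⊗ ℂ^κ. -/
def prodVec (a : ι → ℂ) (b : κ → ℂ) : ι × κ → ℂ := fun p => a p.1 * b p.2

/-- `v` has Schmidt rank at most `k`. -/
def SchmidtRankLE (k : ℕ) (v : ι × κ → ℂ) : Prop :=
  ∃ (a : Fin k → ι → ℂ) (b : Fin k → κ → ℂ), v = ∑ i, prodVec (a i) (b i)

/-- The rank-one operator |v⟩⟨w|. -/
noncomputable def ketBra (v : ι → ℂ) (w : κ → ℂ) : Matrix ι κ ℂ :=
  Matrix.vecMulVec v (star w)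

/-- A finite family of vectors is orthonormal. -/
def Orthonormal' {N : Type*} [DecidableEq N] (v : N → ι → ℂ) : Prop :=
  ∀ i j, vinner (v i) (v j) = if i = j then 1 else 0

/-- The S(k)-norm of `X ∈ M_ι ⊗ M_κ`. -/
noncomputable def SkNorm (k : ℕ) (X : Matrix (ι × κ) (ι × κ) ℂ) : ℝ :=
  sSup { r | ∃ v w : ι × κ → ℂ, vinner v v = 1 ∧ vinner w w = 1 ∧
    SchmidtRankLE k v ∧ SchmidtRankLE k w ∧
    r = ‖vinner v (X.mulVec w)‖ }

/-- The product numerical radius r_k^⊗. -/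
noncomputable def prodRad (k : ℕ) (Y : Matrix (ι × κ) (ι × κ) ℂ) : ℝ :=
  sSup { r | ∃ v : ι × κ → ℂ, vinner v v = 1 ∧ SchmidtRankLE k v ∧
    r = ‖vinner v (Y.mulVec v)‖ }

/-- The norm ‖·‖_{γ,k}. -/
noncomputable def gammaNorm (k : ℕ) (X : Matrix (ι × κ) (ι × κ) ℂ) : ℝ :=
  sInf { r | ∃ (N : ℕ) (c : Fin N → ℂ) (v w : Fin N → (ι × κ → ℂ)),
    (∀ i, vinner (v i) (v i) = 1 ∧ vinner (w i) (w i) = 1 ∧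
      SchmidtRankLE k (v i) ∧ SchmidtRankLE k (w i)) ∧
    X = ∑ i, c i • ketBra (v i) (w i) ∧
    r = ∑ i, ‖c i‖ }

/-- `ρ` is a density matrix. -/
def IsDensity (ρ : Matrix ι ι ℂ) : Prop := ρ.PosSemidef ∧ ρ.trace = 1

/-- `ρ` has Schmidt number at most `k`: it is a convex combination of projections onto
unit vectors of Schmidt rank at most `k`. -/
def SchmidtNumLE (k : ℕ) (ρ : Matrix (ι × κ) (ι × κ) ℂ) : Prop :=
  ∃ (N : ℕ) (p : Fin N → ℝ) (v : Fin N → (ι × κ → ℂ)),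
    (∀ i, 0 ≤ p i ∧ vinner (v i) (v i) = 1 ∧ SchmidtRankLE k (v i)) ∧
    (∑ i, p i) = 1 ∧ ρ = ∑ i, p i • ketBra (v i) (v i)

/-- The robustness norm R_k on Hermitian operators. -/
noncomputable def Rk (k : ℕ) (Y : Matrix (ι × κ) (ι × κ) ℂ) : ℝ :=
  sInf { r | ∃ (c₁ c₂ : ℝ) (ρ₁ ρ₂ : Matrix (ι × κ) (ι × κ) ℂ),
    0 ≤ c₁ ∧ 0 ≤ c₂ ∧ IsDensity ρ₁ ∧ IsDensity ρ₂ ∧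
    SchmidtNumLE k ρ₁ ∧ SchmidtNumLE k ρ₂ ∧
    Y = c₁ • ρ₁ - c₂ • ρ₂ ∧ r = c₁ + c₂ }

/-- `Y` is k-block positive: ⟨v|Y|v⟩ ≥ 0 for every unit vector of Schmidt rank at most `k`. -/
def KBlockPos (k : ℕ) (Y : Matrix (ι × κ) (ι × κ) ℂ) : Prop :=
  ∀ v : ι × κ → ℂ, vinner v v = 1 → SchmidtRankLE k v →
    0 ≤ (vinner v (Y.mulVec v)).re

/-- Dual of a norm on matrices, w.r.t. the Hilbert–Schmidt inner product ⟨W,X⟩ = Tr(Wᴴ X). -/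
noncomputable def dualNormM (f : Matrix ι κ ℂ → ℝ) (X : Matrix ι κ ℂ) : ℝ :=
  sSup { r | ∃ W : Matrix ι κ ℂ, f W ≤ 1 ∧ r = ‖(Wᴴ * X).trace‖ }

/-- Dual of a norm, computed in the real Hilbert space of Hermitian matrices with the
Hilbert–Schmidt inner product ⟨W,Y⟩ = Tr(WY). -/
noncomputable def dualNormHerm (f : Matrix ι ι ℂ → ℝ) (Y : Matrix ι ι ℂ) : ℝ :=
  sSup { r | ∃ W : Matrix ι ι ℂ, W.IsHermitian ∧ f W ≤ 1 ∧ r = |((W * Y).trace).re| }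

/-- The Frobenius norm of a matrix. -/
noncomputable def frobNorm (X : Matrix ι κ ℂ) : ℝ :=
  Real.sqrt (∑ i, ∑ j, Complex.normSq (X i j))

/-- The (k,2)-norm: ‖X‖_{(k,2)} = sup { |Tr(XY)| : rank Y ≤ k, ‖Y‖_F ≤ 1 }. -/
noncomputable def kNorm (k : ℕ) (X : Matrix ι κ ℂ) : ℝ :=
  sSup { r | ∃ Y : Matrix κ ι ℂ, Y.rank ≤ k ∧ frobNorm Y ≤ 1 ∧
    r = ‖(X * Y).trace‖ }

/-- The trace norm: the sum of the singular values, i.e. of the square roots of the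
eigenvalues of Xᴴ X. -/
noncomputable def traceNorm [DecidableEq κ] (X : Matrix ι κ ℂ) : ℝ :=
  ∑ i, Real.sqrt ((Matrix.isHermitian_conjTranspose_mul_self X).eigenvalues i)

/-- The s(k) vector norm: sup of |⟨u,w⟩| over unit vectors u of Schmidt rank at most k. -/
noncomputable def skVecNorm (k : ℕ) (w : ι × κ → ℂ) : ℝ :=
  sSup { r | ∃ u : ι × κ → ℂ, vinner u u = 1 ∧ SchmidtRankLE k u ∧
    r = ‖vinner u w‖ }

/-- Dual of a norm on vectors. -/
noncomputable def dualNormV (f : (ι × κ → ℂ) → ℝ) (v : ι × κ → ℂ) : ℝ :=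
  sSup { r | ∃ w : ι × κ → ℂ, f w ≤ 1 ∧ r = ‖vinner w v‖ }

/-- The realignment map, L(X)_{(i,k),(j,l)} = X_{(i,j),(k,l)}. -/
def realign {m n : ℕ} (X : Matrix (Fin m × Fin n) (Fin m × Fin n) ℂ) :
    Matrix (Fin m × Fin m) (Fin n × Fin n) ℂ :=
  fun p q => X (p.1, q.1) (p.2, q.2)

/-- The projective tensor norm on M_{m,n} ⊗ M_{m,n}. -/
noncomputable def projNorm {m n : ℕ} (Z : Matrix (Fin m × Fin m) (Fin n × Fin n) ℂ) : ℝ :=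
  sInf { r | ∃ (N : ℕ) (A B : Fin N → Matrix (Fin m) (Fin n) ℂ),
    Z = ∑ i, A i ⊗ₖ B i ∧ r = ∑ i, traceNorm (A i) * traceNorm (B i) }


/-- The operator norm on M_ι,κ. -/
noncomputable def opNorm {ι κ : Type*} [Fintype ι] [Fintype κ] (X : Matrix ι κ ℂ) : ℝ :=
  sSup { r | ∃ v : ι → ℂ, ∃ w : κ → ℂ, vinner v v = 1 ∧ vinner w w = 1 ∧
    r = ‖vinner v (X.mulVec w)‖ }

section Helpers

/-- An invertible element of a C⋆-algebra is `‖a‖` times the mean of two unitaries. -/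
lemma exists_two_unitary {A : Type*} [CStarAlgebra A] (a : A) (ha : IsUnit a) :
    ∃ V W : A, V ∈ unitary A ∧ W ∈ unitary A ∧
      a = ((‖a‖ / 2 : ℝ) : ℂ) • V + ((‖a‖ / 2 : ℝ) : ℂ) • W := by
  let _ := CStarAlgebra.spectralOrder A
  let _ := CStarAlgebra.spectralOrderedRing A
  by_cases h0 : a = 0
  · exact ⟨1, 1, one_mem _, one_mem _, by simp [h0]⟩
  have hpos : 0 < ‖a‖ := norm_pos_iff.2 h0
  have hPsa : IsSelfAdjoint (CFC.abs a) := (CFC.abs_nonneg a).isSelfAdjoint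
  have hPP : CFC.abs a * CFC.abs a = star a * a := CFC.abs_mul_abs a
  have hPu : IsUnit (CFC.abs a) := by
    have h : IsUnit (CFC.abs a * CFC.abs a) := by rw [hPP]; exact ha.star.mul ha
    exact ((Commute.refl (CFC.abs a)).isUnit_mul_iff.1 h).1
  have hPn : ‖CFC.abs a‖ = ‖a‖ := by
    have h1 : ‖CFC.abs a * CFC.abs a‖ = ‖CFC.abs a‖ * ‖CFC.abs a‖ := by
      have := CStarRing.norm_star_mul_self (x := CFC.abs a)
      rwa [hPsa.star_eq] at this
    rw [hPP, CStarRing.norm_star_mul_self] at h1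
    nlinarith [norm_nonneg a, norm_nonneg (CFC.abs a),
      (mul_self_inj (norm_nonneg a) (norm_nonneg (CFC.abs a))).1 h1]
  generalize CFC.abs a = P at *
  obtain ⟨p, rfl⟩ := hPu
  have hps : star (↑p⁻¹ : A) = ↑p⁻¹ := by
    rw [← Units.coe_star, star_inv]
    congr 2
    exact Units.ext hPsa.star_eq
  set u : A := a * ↑p⁻¹ with hu
  have huu : star u * u = 1 := by
    rw [hu, star_mul, hps]
    calc (↑p⁻¹ : A) * star a * (a * ↑p⁻¹) = ↑p⁻¹ * (star a * a) * ↑p⁻¹ := by simp only [mul_assoc]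
      _ = 1 := by rw [← hPP]; simp
  have hum : u ∈ unitary A := (ha.mul (Units.isUnit _)).mem_unitary_of_star_mul_self huu
  have hap : a = u * p := by simp [hu]
  set b : A := ((‖a‖⁻¹ : ℝ)) • (p : A) with hb
  have hbsa : IsSelfAdjoint b := (IsSelfAdjoint.all (‖a‖⁻¹ : ℝ)).smul hPsa
  have hbn : ‖b‖ ≤ 1 := by
    rw [hb, norm_smul, hPn]; simp [hpos.ne']
  have hV := hbsa.self_add_I_smul_cfcSqrt_sub_sq_mem_unitary b hbn
  set s := CFC.sqrt (1 - b ^ 2) with hs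
  have hssa : IsSelfAdjoint s := (CFC.sqrt_nonneg (1 - b ^ 2)).isSelfAdjoint
  have hW := Unitary.star_mem hV
  refine ⟨u * (b + Complex.I • s), u * star (b + Complex.I • s), mul_mem hum hV, mul_mem hum hW, ?_⟩
  have hpb : (p : A) = ‖a‖ • b := by rw [hb, smul_smul, mul_inv_cancel₀ hpos.ne', one_smul]
  have hadd : (b + Complex.I • s) + star (b + Complex.I • s) = (2 : ℝ) • b := by
    clear_value b s
    rw [star_add, hbsa.star_eq, star_smul, hssa.star_eq]
    simp [two_smul]
    abel
  rw [← smul_add, ← mul_add, hadd, Complex.coe_smul, mul_smul_comm, smul_smul,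
    div_mul_cancel₀ _ two_ne_zero, ← mul_smul_comm, ← hpb, ← hap]

open scoped Matrix.Norms.L2Operator

lemma vinner_eq_inner {n : ℕ} (v w : Fin n → ℂ) :
    vinner v w = inner ℂ (WithLp.toLp 2 v) (WithLp.toLp 2 w) := by
  rw [EuclideanSpace.inner_eq_star_dotProduct, vinner, dotProduct_comm]

lemma vinner_self_iff {n : ℕ} (v : Fin n → ℂ) :
    vinner v v = 1 ↔ ‖WithLp.toLp 2 v‖ = 1 := by
  rw [vinner_eq_inner, inner_self_eq_norm_sq_to_K]
  have h0 := norm_nonneg (WithLp.toLp 2 v)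
  rw [← pow_eq_one_iff_of_nonneg h0 two_ne_zero]
  change ((‖WithLp.toLp 2 v‖ : ℂ)) ^ 2 = 1 ↔ _
  exact_mod_cast Iff.rfl

lemma norm_vinner_le {n : ℕ} (X : Matrix (Fin n) (Fin n) ℂ) (v w : Fin n → ℂ)
    (hv : vinner v v = 1) (hw : vinner w w = 1) : ‖vinner v (X.mulVec w)‖ ≤ ‖X‖ := by
  rw [vinner_self_iff] at hv hw
  rw [vinner_eq_inner, ← Matrix.toEuclideanCLM_toLp]
  refine (norm_inner_le_norm _ _).trans ?_
  rw [hv, one_mul]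
  refine (ContinuousLinearMap.le_opNorm _ _).trans ?_
  rw [hw, mul_one, Matrix.l2_opNorm_toEuclideanCLM]

lemma opNorm_eq_norm {n : ℕ} (X : Matrix (Fin n) (Fin n) ℂ) : opNorm X = ‖X‖ := by
  apply le_antisymm
  · refine Real.sSup_le ?_ (norm_nonneg _)
    rintro r ⟨v, w, hv, hw, rfl⟩
    exact norm_vinner_le X v w hv hw
  · have hnn : 0 ≤ opNorm X := by
      apply Real.sSup_nonneg
      rintro r ⟨v, w, hv, hw, rfl⟩
      exact norm_nonneg _
    have hle : ∀ v w : Fin n → ℂ, vinner v v = 1 → vinner w w = 1 →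
        ‖vinner v (X.mulVec w)‖ ≤ opNorm X := by
      intro v w hv hw
      refine le_csSup ⟨‖X‖, ?_⟩ ⟨v, w, hv, hw, rfl⟩
      rintro r ⟨v, w, hv, hw, rfl⟩
      exact norm_vinner_le X v w hv hw
    rw [← Matrix.l2_opNorm_toEuclideanCLM]
    refine ContinuousLinearMap.opNorm_le_of_unit_norm hnn ?_
    intro w hw
    by_cases h0 : Matrix.toEuclideanCLM (𝕜 := ℂ) X w = 0
    · rw [h0, norm_zero]; exact hnn
    set y := Matrix.toEuclideanCLM (𝕜 := ℂ) X w with hy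
    have hypos : 0 < ‖y‖ := norm_pos_iff.2 h0
    set v := ((‖y‖⁻¹ : ℝ) : ℂ) • y with hv
    have hvn : ‖v‖ = 1 := by rw [hv, norm_smul]; simp [hypos.ne']
    have h := hle v.ofLp w.ofLp ((vinner_self_iff _).2 hvn) ((vinner_self_iff _).2 hw)
    rw [vinner_eq_inner, ← Matrix.toEuclideanCLM_toLp] at h
    change ‖inner ℂ v y‖ ≤ _ at h
    rw [hv, inner_smul_left, inner_self_eq_norm_sq_to_K] at h
    have e : ‖(starRingEnd ℂ) ((‖y‖⁻¹ : ℝ) : ℂ) * ((‖y‖ : ℂ)) ^ 2‖ = ‖y‖ := by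
      simp
      field_simp
    exact e ▸ h

lemma norm_unitary_le {n : ℕ} (U : Matrix (Fin n) (Fin n) ℂ)
    (hU : U ∈ Matrix.unitaryGroup (Fin n) ℂ) : ‖U‖ ≤ 1 := by
  rcases subsingleton_or_nontrivial (Matrix (Fin n) (Fin n) ℂ) with h | h
  · rw [Subsingleton.elim U 0, norm_zero]; exact zero_le_one
  · exact (CStarRing.norm_of_mem_unitary hU).le

lemma exists_unit_shift {n : ℕ} (X : Matrix (Fin n) (Fin n) ℂ) (δ : ℝ) (hδ : 0 < δ) :
    ∃ ε : ℝ, 0 < ε ∧ ε < δ ∧ IsUnit (X + (ε : ℂ) • (1 : Matrix (Fin n) (Fin n) ℂ)) := by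
  have hfin : (spectrum ℂ (-X)).Finite := Matrix.finite_spectrum _
  have hinj : Function.Injective (fun e : ℝ => (e : ℂ)) := Complex.ofReal_injective
  obtain ⟨e, he, hne⟩ := (Set.Ioo_infinite hδ).exists_notMem_finite
    (hfin.preimage hinj.injOn)
  refine ⟨e, he.1, he.2, ?_⟩
  have : IsUnit (algebraMap ℂ (Matrix (Fin n) (Fin n) ℂ) (e : ℂ) - -X) := by
    by_contra hc
    exact hne hc
  rwa [sub_neg_eq_add, add_comm, Algebra.algebraMap_eq_smul_one] at this

lemma main_aux {n : ℕ} (X : Matrix (Fin n) (Fin n) ℂ) :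
    opNorm X = sInf { r | ∃ (N : ℕ) (c : Fin N → ℂ) (U : Fin N → Matrix (Fin n) (Fin n) ℂ),
      (∀ i, U i ∈ Matrix.unitaryGroup (Fin n) ℂ) ∧
      X = ∑ i, c i • U i ∧ r = ∑ i, ‖c i‖ } := by
  rw [opNorm_eq_norm]
  apply le_antisymm
  · refine le_csInf ?_ ?_
    · obtain ⟨u, c, h, -⟩ := CStarAlgebra.exists_sum_four_unitary X
      exact ⟨_, 4, c, fun i => (u i : Matrix (Fin n) (Fin n) ℂ), fun i => (u i).2, h, rfl⟩
    · rintro r ⟨N, c, U, hU, rfl, rfl⟩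
      refine (norm_sum_le _ _).trans (Finset.sum_le_sum fun i _ => ?_)
      rw [norm_smul]
      exact mul_le_of_le_one_right (norm_nonneg _) (norm_unitary_le _ (hU i))
  · refine le_of_forall_pos_lt_add fun δ hδ => ?_
    obtain ⟨e, he, heδ, hunit⟩ := exists_unit_shift X (δ / 2) (half_pos hδ)
    obtain ⟨V, W, hV, hW, hVW⟩ := exists_two_unitary _ hunit
    set t := ‖X + (e : ℂ) • (1 : Matrix (Fin n) (Fin n) ℂ)‖ with ht
    have hte : t ≤ ‖X‖ + e := by
      refine (norm_add_le _ _).trans ?_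
      gcongr
      rw [norm_smul, Complex.norm_real, Real.norm_of_nonneg he.le]
      exact mul_le_of_le_one_right he.le (norm_unitary_le _ (one_mem _))
    have ht0 : 0 ≤ t := norm_nonneg _
    refine lt_of_le_of_lt (csInf_le ⟨0, ?_⟩
      ⟨3, ![((t / 2 : ℝ) : ℂ), ((t / 2 : ℝ) : ℂ), -(e : ℂ)], ![V, W, 1], ?_, ?_, rfl⟩) ?_
    · rintro r ⟨N, c, U, hU, -, rfl⟩
      positivity
    · intro i
      fin_cases i
      · exact hV
      · exact hW
      · exact one_mem _
    · simp only [Fin.sum_univ_three, Matrix.cons_val]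
      rw [← hVW, neg_smul, add_neg_cancel_right]
    · simp only [Fin.sum_univ_three, Matrix.cons_val, norm_neg, Complex.norm_real,
        Real.norm_of_nonneg he.le, Real.norm_of_nonneg (div_nonneg ht0 zero_le_two)]
      linarith

end Helpers

/-- the operator norm of `X ∈ M_n(ℂ)` is the infimum of `Σᵢ |cᵢ|` over all
finite decompositions `X = Σᵢ cᵢ Uᵢ` of `X` as a linear combination of unitary matrices. -/
theorem operatorNorm_eq_inf_unitary_decompositions {n : ℕ} (X : Matrix (Fin n) (Fin n) ℂ) :
    opNorm X = sInf { r | ∃ (N : ℕ) (c : Fin N → ℂ) (U : Fin N → Matrix (Fin n) (Fin n) ℂ),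
      (∀ i, U i ∈ Matrix.unitaryGroup (Fin n) ℂ) ∧
      X = ∑ i, c i • U i ∧ r = ∑ i, ‖c i‖ } := by
  exact main_aux X

end Ent
end

section
/- Let Y ∈ M_m ⊗ M_n be Hermitian, written as Y = cI − X with c ∈ ℝ and X positive semidefinite, and fix 1 ≤ k ≤ min(m,n). Then the following are equivalent: (a) Y is k-block positive; (b) c ≥ ‖X‖_{S(k)}; (c) c ≥ r_k^⊗(X). -/
open scoped Kronecker ComplexOrder
open Matrix

namespace Ent

variable {ι κ : Type*} [Fintype ι] [Fintype κ]

lemma vinner_star_swap (X : Matrix ι ι ℂ) (hX : X.IsHermitian) (v w : ι → ℂ) :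
    vinner w (X.mulVec v) = star (vinner v (X.mulVec w)) := by
  unfold vinner
  rw [← star_dotProduct_star, star_star, star_mulVec, hX.eq, dotProduct_mulVec]

lemma norm_vinner_le_s4 (X : Matrix ι ι ℂ) (hX : X.PosSemidef) (v w : ι → ℂ) :
    2 * ‖vinner v (X.mulVec w)‖ ≤ (vinner v (X.mulVec v)).re + (vinner w (X.mulVec w)).re := by
  obtain ⟨u, hu, hz⟩ := Complex.exists_norm_eq_mul_self (vinner v (X.mulVec w))
  have h := hX.dotProduct_mulVec_nonneg (v - u • w)
  have e : dotProduct (star (v - u • w)) (X.mulVec (v - u • w)) =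
      vinner v (X.mulVec v) - u * vinner v (X.mulVec w)
        - star (u * vinner v (X.mulVec w)) + (star u * u) * vinner w (X.mulVec w) := by
    rw [star_mul', ← vinner_star_swap X hX.1]
    simp only [vinner, star_sub, star_smul, mulVec_sub, mulVec_smul, sub_dotProduct,
      dotProduct_sub, smul_dotProduct, dotProduct_smul, smul_eq_mul]
    ring
  have hu2 : star u * u = 1 := by
    have := Complex.conj_mul' u
    rw [hu] at this
    simpa using this
  rw [e, ← hz, hu2] at h
  have h2 := (Complex.le_def.1 h).1
  simp at h2
  linarith

lemma norm_coord_le (v : ι → ℂ) (hv : vinner v v = 1) (i : ι) : ‖v i‖ ≤ 1 := by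
  have h : (∑ j, ‖v j‖ ^ 2 : ℝ) = 1 := by
    have : ((∑ j, ‖v j‖ ^ 2 : ℝ) : ℂ) = 1 := by
      rw [← hv]
      simp [vinner, dotProduct, Complex.conj_mul']
    exact_mod_cast this
  have h1 := Finset.single_le_sum (f := fun j => ‖v j‖ ^ 2) (fun j _ => by positivity)
    (Finset.mem_univ i)
  simp only [h] at h1
  nlinarith [norm_nonneg (v i)]

lemma norm_vinner_bdd (X : Matrix ι ι ℂ) (v w : ι → ℂ) (hv : vinner v v = 1)
    (hw : vinner w w = 1) : ‖vinner v (X.mulVec w)‖ ≤ ∑ i, ∑ j, ‖X i j‖ := by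
  unfold vinner mulVec dotProduct
  refine (norm_sum_le _ _).trans (Finset.sum_le_sum fun i _ => ?_)
  rw [norm_mul]
  have h1 : ‖(star v) i‖ ≤ 1 := by simpa using norm_coord_le v hv i
  refine (mul_le_of_le_one_left (norm_nonneg _) h1).trans ?_
  refine (norm_sum_le _ _).trans (Finset.sum_le_sum fun j _ => ?_)
  rw [norm_mul]
  exact mul_le_of_le_one_right (norm_nonneg _) (norm_coord_le w hw j)

lemma exists_unit_schmidt {m n k : ℕ} (hk1 : 1 ≤ k) (hk : k ≤ min m n) :
    ∃ v : Fin m × Fin n → ℂ, vinner v v = 1 ∧ SchmidtRankLE k v := by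
  classical
  have hm : 0 < m := by omega
  have hn : 0 < n := by omega
  refine ⟨prodVec (Pi.single ⟨0, hm⟩ 1) (Pi.single ⟨0, hn⟩ 1), ?_,
    Pi.single ⟨0, hk1⟩ (Pi.single ⟨0, hm⟩ 1), fun _ => Pi.single ⟨0, hn⟩ 1, ?_⟩
  · simp [vinner, dotProduct, prodVec, Fintype.sum_prod_type, Pi.single_apply]
  · rw [Finset.sum_eq_single ⟨0, hk1⟩]
    · simp
    · intro b _ hb
      ext p
      simp [prodVec, Pi.single_eq_of_ne hb]
    · simp

lemma kBlockPos_iff_forall {k : ℕ} [DecidableEq ι] [DecidableEq κ]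
    (X : Matrix (ι × κ) (ι × κ) ℂ) (c : ℝ) :
    KBlockPos k (c • (1 : Matrix (ι × κ) (ι × κ) ℂ) - X) ↔
      ∀ v : ι × κ → ℂ, vinner v v = 1 → SchmidtRankLE k v → (vinner v (X.mulVec v)).re ≤ c := by
  unfold KBlockPos
  refine forall_congr' fun v => forall_congr' fun hv => forall_congr' fun _ => ?_
  have : vinner v ((c • (1 : Matrix (ι × κ) (ι × κ) ℂ) - X).mulVec v) =
      c - vinner v (X.mulVec v) := by
    have h2 : vinner v ((c • (1 : Matrix (ι × κ) (ι × κ) ℂ) - X).mulVec v) =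
      c * vinner v v - vinner v (X.mulVec v) := by
      simp [vinner, sub_mulVec, smul_mulVec, dotProduct_sub, dotProduct_smul]
    rw [h2, hv, mul_one]
  rw [this]
  simp

/-- for `Y = c·I - X` Hermitian with `X` positive semidefinite, the following are
equivalent: (a) `Y` is k-block positive; (b) `c ≥ ‖X‖_{S(k)}`; (c) `c ≥ r_k^⊗(X)`. -/
theorem kBlockPos_iff_SkNorm_le {m n k : ℕ} (hk1 : 1 ≤ k) (hk : k ≤ min m n)
    (X : Matrix (Fin m × Fin n) (Fin m × Fin n) ℂ) (hX : X.PosSemidef) (c : ℝ) :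
    (KBlockPos k (c • (1 : Matrix (Fin m × Fin n) (Fin m × Fin n) ℂ) - X) ↔ SkNorm k X ≤ c) ∧
    (KBlockPos k (c • (1 : Matrix (Fin m × Fin n) (Fin m × Fin n) ℂ) - X) ↔ prodRad k X ≤ c) := by
  have hne := exists_unit_schmidt hk1 hk
  rw [kBlockPos_iff_forall]
  constructor
  · constructor
    · intro h
      obtain ⟨v, hv, hs⟩ := hne
      refine csSup_le ⟨_, v, v, hv, hv, hs, hs, rfl⟩ ?_
      rintro r ⟨v, w, hv, hw, hsv, hsw, rfl⟩
      linarith [norm_vinner_le_s4 X hX v w, h v hv hsv, h w hw hsw]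
    · intro h v hv hs
      refine (Complex.re_le_norm _).trans (le_trans (le_csSup ?_ ?_) h)
      · refine ⟨∑ i, ∑ j, ‖X i j‖, ?_⟩
        rintro r ⟨v, w, hv, hw, -, -, rfl⟩
        exact norm_vinner_bdd X v w hv hw
      · exact ⟨v, v, hv, hv, hs, hs, rfl⟩
  · constructor
    · intro h
      obtain ⟨v, hv, hs⟩ := hne
      refine csSup_le ⟨_, v, hv, hs, rfl⟩ ?_
      rintro r ⟨v, hv, hsv, rfl⟩
      linarith [norm_vinner_le_s4 X hX v v, h v hv hsv]
    · intro h v hv hs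
      refine (Complex.re_le_norm _).trans (le_trans (le_csSup ?_ ?_) h)
      · refine ⟨∑ i, ∑ j, ‖X i j‖, ?_⟩
        rintro r ⟨v, hv, -, rfl⟩
        exact norm_vinner_bdd X v v hv hv
      · exact ⟨v, hv, hs, rfl⟩

end Ent
end

section
/- Fix 1 ≤ k ≤ min(m,n). For every X ∈ M_m ⊗ M_n, the dual norm of the S(k)-norm equals the norm ‖·‖_{γ,k}: that is, ‖X‖_{S(k)}° = ‖X‖_{γ,k}. -/
open scoped Kronecker ComplexOrder
open Matrix

namespace Ent

variable {ι κ : Type*} [Fintype ι] [Fintype κ]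

/-- `X` admits a decomposition with total weight `r`. -/
def Dec (k : ℕ) (X : Matrix (ι × κ) (ι × κ) ℂ) (r : ℝ) : Prop :=
  ∃ (N : ℕ) (c : Fin N → ℂ) (v w : Fin N → (ι × κ → ℂ)),
    (∀ i, vinner (v i) (v i) = 1 ∧ vinner (w i) (w i) = 1 ∧
      SchmidtRankLE k (v i) ∧ SchmidtRankLE k (w i)) ∧
    X = ∑ i, c i • ketBra (v i) (w i) ∧
    r = ∑ i, ‖c i‖

theorem gammaNorm_eq (k : ℕ) (X : Matrix (ι × κ) (ι × κ) ℂ) :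
    gammaNorm k X = sInf {r | Dec k X r} := rfl

theorem Dec.nonneg {k : ℕ} {X : Matrix (ι × κ) (ι × κ) ℂ} {r : ℝ} (h : Dec k X r) : 0 ≤ r := by
  obtain ⟨N, c, v, w, -, -, rfl⟩ := h
  exact Finset.sum_nonneg fun i _ => norm_nonneg _

theorem Dec.zero (k : ℕ) : Dec k (0 : Matrix (ι × κ) (ι × κ) ℂ) 0 :=
  ⟨0, Fin.elim0, Fin.elim0, Fin.elim0, fun i => i.elim0, by simp, by simp⟩

theorem Dec.single {k : ℕ} (c : ℂ) {v w : ι × κ → ℂ} (hv : vinner v v = 1) (hw : vinner w w = 1)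
    (sv : SchmidtRankLE k v) (sw : SchmidtRankLE k w) : Dec k (c • ketBra v w) ‖c‖ :=
  ⟨1, fun _ => c, fun _ => v, fun _ => w, fun _ => ⟨hv, hw, sv, sw⟩, by simp, by simp⟩

theorem Dec.add {k : ℕ} {X Y : Matrix (ι × κ) (ι × κ) ℂ} {r s : ℝ} (hX : Dec k X r)
    (hY : Dec k Y s) : Dec k (X + Y) (r + s) := by
  obtain ⟨N, c, v, w, h, hx, hr⟩ := hX
  obtain ⟨M, d, v', w', h', hy, hs⟩ := hY
  refine ⟨N + M, Fin.append c d, Fin.append v v', Fin.append w w', ?_, ?_, ?_⟩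
  · intro i
    refine Fin.addCases (fun i => ?_) (fun i => ?_) i
    · simpa using h i
    · simpa using h' i
  · simp [Fin.sum_univ_add, hx, hy]
  · simp [Fin.sum_univ_add, hr, hs]

theorem Dec.smul {k : ℕ} {X : Matrix (ι × κ) (ι × κ) ℂ} {r : ℝ} (hX : Dec k X r) (t : ℝ)
    (ht : 0 ≤ t) : Dec k (t • X) (t * r) := by
  obtain ⟨N, c, v, w, h, hx, hr⟩ := hX
  refine ⟨N, fun i => t • c i, v, w, h, ?_, ?_⟩
  · rw [hx, Finset.smul_sum]
    exact Finset.sum_congr rfl fun i _ => (smul_assoc t (c i) _).symm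
  · simp [hr, Finset.mul_sum, abs_of_nonneg ht]

theorem schmidt_single [DecidableEq ι] [DecidableEq κ] {k : ℕ} (hk : 1 ≤ k) (p : ι × κ) :
    SchmidtRankLE k (Pi.single p 1 : ι × κ → ℂ) := by
  refine ⟨Pi.single ⟨0, hk⟩ (Pi.single p.1 1), fun _ => Pi.single p.2 1, ?_⟩
  rw [Finset.sum_eq_single (⟨0, hk⟩ : Fin k)]
  · funext q
    obtain ⟨a, b⟩ := p
    obtain ⟨a', b'⟩ := q
    by_cases h1 : a' = a <;> by_cases h2 : b' = b <;>
      simp [prodVec, Pi.single_apply, h1, h2]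
  · intro b _ hb
    funext q
    simp [prodVec, hb]
  · simp

theorem vinner_single [DecidableEq ι] (p : ι) :
    vinner (Pi.single p 1 : ι → ℂ) (Pi.single p 1) = 1 := by
  simp [vinner]

theorem exists_dec [DecidableEq ι] [DecidableEq κ] {k : ℕ} (hk : 1 ≤ k)
    (X : Matrix (ι × κ) (ι × κ) ℂ) : ∃ r, Dec k X r := by
  induction X using Matrix.induction_on' with
  | h_zero => exact ⟨0, Dec.zero k⟩
  | h_add p q hp hq =>
    obtain ⟨r, hr⟩ := hp
    obtain ⟨s, hs⟩ := hq
    exact ⟨_, hr.add hs⟩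
  | h_std_basis i j x =>
    refine ⟨‖x‖, ?_⟩
    have := Dec.single (k := k) x (vinner_single i) (vinner_single j) (schmidt_single hk i)
      (schmidt_single hk j)
    convert this using 1
    ext a b
    by_cases h1 : i = a <;> by_cases h2 : j = b <;>
      simp [ketBra, vecMulVec_apply, Matrix.single_apply, Pi.single_apply, h1, h2, eq_comm]

theorem trace_ketBra (W : Matrix ι κ ℂ) (v : ι → ℂ) (w : κ → ℂ) :
    (Wᴴ * ketBra v w).trace = star (vinner v (W.mulVec w)) := by
  simp only [Matrix.trace, Matrix.diag, Matrix.mul_apply, ketBra, vecMulVec_apply, vinner,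
    dotProduct, mulVec, conjTranspose_apply, star_sum, star_mul', Pi.star_apply, star_star,
    Finset.mul_sum]
  rw [Finset.sum_comm]
  refine Finset.sum_congr rfl fun i _ => Finset.sum_congr rfl fun j _ => ?_
  ring

theorem norm_le_one_of_vinner {v : ι → ℂ} (h : vinner v v = 1) (i : ι) : ‖v i‖ ≤ 1 := by
  have h2 : ∑ j, ‖v j‖ ^ 2 = 1 := by
    have : ((∑ j, ‖v j‖ ^ 2 : ℝ) : ℂ) = 1 := by
      rw [← h]
      simp [vinner, dotProduct, Complex.conj_mul']
    exact_mod_cast this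
  have h3 : ‖v i‖ ^ 2 ≤ ∑ j, ‖v j‖ ^ 2 :=
    Finset.single_le_sum (f := fun j => ‖v j‖ ^ 2) (fun j _ => by positivity) (Finset.mem_univ i)
  have := norm_nonneg (v i)
  nlinarith

theorem le_SkNorm {k : ℕ} (W : Matrix (ι × κ) (ι × κ) ℂ) {v w : ι × κ → ℂ}
    (hv : vinner v v = 1) (hw : vinner w w = 1)
    (sv : SchmidtRankLE k v) (sw : SchmidtRankLE k w) :
    ‖vinner v (W.mulVec w)‖ ≤ SkNorm k W := by
  refine le_csSup ⟨∑ i, ∑ j, ‖W i j‖, ?_⟩ ⟨v, w, hv, hw, sv, sw, rfl⟩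
  rintro r ⟨v, w, hv, hw, -, -, rfl⟩
  simp only [vinner, dotProduct, mulVec, Finset.mul_sum]
  refine (norm_sum_le _ _).trans (Finset.sum_le_sum fun i _ => ?_)
  refine (norm_sum_le _ _).trans (Finset.sum_le_sum fun j _ => ?_)
  have h1 := norm_le_one_of_vinner hv i
  have h2 := norm_le_one_of_vinner hw j
  rw [norm_mul, norm_mul, Pi.star_apply, norm_star]
  calc ‖v i‖ * (‖W i j‖ * ‖w j‖) ≤ 1 * (‖W i j‖ * 1) := by gcongr
    _ = _ := by ring

theorem trace_le_of_dec {k : ℕ} {W X : Matrix (ι × κ) (ι × κ) ℂ} {r : ℝ}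
    (hW : SkNorm k W ≤ 1) (h : Dec k X r) : ‖(Wᴴ * X).trace‖ ≤ r := by
  obtain ⟨N, c, v, w, h, rfl, rfl⟩ := h
  rw [Finset.mul_sum, Matrix.trace_sum]
  refine (norm_sum_le _ _).trans (Finset.sum_le_sum fun i _ => ?_)
  obtain ⟨hv, hw, sv, sw⟩ := h i
  rw [Matrix.mul_smul, Matrix.trace_smul, trace_ketBra, norm_smul, norm_star]
  have := (le_SkNorm W hv hw sv sw).trans hW
  exact mul_le_of_le_one_right (norm_nonneg _) this

theorem bddBelow_dec (k : ℕ) (X : Matrix (ι × κ) (ι × κ) ℂ) : BddBelow {r | Dec k X r} :=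
  ⟨0, fun _ h => Dec.nonneg h⟩

theorem gammaNorm_le {k : ℕ} {X : Matrix (ι × κ) (ι × κ) ℂ} {r : ℝ} (h : Dec k X r) :
    gammaNorm k X ≤ r := csInf_le (bddBelow_dec k X) h

theorem gammaNorm_nonneg (k : ℕ) (X : Matrix (ι × κ) (ι × κ) ℂ) : 0 ≤ gammaNorm k X :=
  Real.sInf_nonneg fun _ h => Dec.nonneg h

theorem gammaNorm_add [DecidableEq ι] [DecidableEq κ] {k : ℕ} (hk : 1 ≤ k)
    (X Y : Matrix (ι × κ) (ι × κ) ℂ) :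
    gammaNorm k (X + Y) ≤ gammaNorm k X + gammaNorm k Y := by
  have h1 : ∀ r, Dec k X r → ∀ s, Dec k Y s → gammaNorm k (X + Y) ≤ r + s :=
    fun r hr s hs => gammaNorm_le (hr.add hs)
  have h2 : ∀ r, Dec k X r → gammaNorm k (X + Y) - r ≤ gammaNorm k Y := fun r hr =>
    le_csInf (exists_dec hk Y) fun s hs => by linarith [h1 r hr s hs]
  have h3 : gammaNorm k (X + Y) - gammaNorm k Y ≤ gammaNorm k X :=
    le_csInf (exists_dec hk X) fun r hr => by linarith [h2 r hr]
  linarith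

theorem gammaNorm_smul_le [DecidableEq ι] [DecidableEq κ] {k : ℕ} (hk : 1 ≤ k)
    (t : ℝ) (ht : 0 < t) (X : Matrix (ι × κ) (ι × κ) ℂ) :
    gammaNorm k (t • X) ≤ t * gammaNorm k X := by
  have : gammaNorm k (t • X) / t ≤ gammaNorm k X :=
    le_csInf (exists_dec hk X) fun r hr => by
      rw [div_le_iff₀ ht, mul_comm]
      exact gammaNorm_le (Dec.smul hr t ht.le)
  rwa [div_le_iff₀ ht, mul_comm] at this

theorem gammaNorm_smul [DecidableEq ι] [DecidableEq κ] {k : ℕ} (hk : 1 ≤ k)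
    (t : ℝ) (ht : 0 < t) (X : Matrix (ι × κ) (ι × κ) ℂ) :
    gammaNorm k (t • X) = t * gammaNorm k X := by
  refine le_antisymm (gammaNorm_smul_le hk t ht X) ?_
  have := gammaNorm_smul_le hk t⁻¹ (inv_pos.2 ht) (t • X)
  rwa [smul_smul, inv_mul_cancel₀ ht.ne', one_smul, inv_mul_eq_div, le_div_iff₀ ht,
    mul_comm] at this

theorem gammaNorm_zero (k : ℕ) : gammaNorm k (0 : Matrix (ι × κ) (ι × κ) ℂ) = 0 :=
  le_antisymm (gammaNorm_le (Dec.zero k)) (gammaNorm_nonneg _ _)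

/-- Real functionals are real parts of Hilbert-Schmidt inner products. -/
theorem exists_repr [DecidableEq ι] [DecidableEq κ] (g : Matrix ι κ ℂ →ₗ[ℝ] ℝ) :
    ∃ W : Matrix ι κ ℂ, ∀ Y, g Y = ((Wᴴ * Y).trace).re := by
  refine ⟨Matrix.of fun i j => ⟨g (Matrix.single i j 1), g (Matrix.single i j Complex.I)⟩, fun Y => ?_⟩
  have hY : Y = ∑ i, ∑ j, ((Y i j).re • Matrix.single i j (1 : ℂ)
      + (Y i j).im • Matrix.single i j Complex.I) := by
    conv_lhs => rw [Matrix.matrix_eq_sum_single Y]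
    refine Finset.sum_congr rfl fun i _ => Finset.sum_congr rfl fun j _ => ?_
    rw [Matrix.smul_single, Matrix.smul_single, ← Matrix.single_add]
    congr 1
    apply Complex.ext <;> simp
  conv_lhs => rw [hY]
  simp only [map_sum, map_add, map_smul, Matrix.trace, Matrix.diag, Matrix.mul_apply,
    Complex.re_sum, conjTranspose_apply]
  rw [Finset.sum_comm]
  refine Finset.sum_congr rfl fun i _ => Finset.sum_congr rfl fun j _ => ?_
  simp
  try ring

theorem exists_functional [DecidableEq ι] [DecidableEq κ] {k : ℕ} (hk : 1 ≤ k)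
    (X : Matrix (ι × κ) (ι × κ) ℂ) :
    ∃ g : Matrix (ι × κ) (ι × κ) ℂ →ₗ[ℝ] ℝ, g X = gammaNorm k X ∧ ∀ Y, g Y ≤ gammaNorm k Y := by
  have H : ∀ c : ℝ, c • X = 0 → (RingHom.id ℝ) c • gammaNorm k X = 0 := by
    intro c hc
    rcases smul_eq_zero.1 hc with h | h
    · simp [h]
    · simp [h, gammaNorm_zero]
  obtain ⟨g, hg, hle⟩ := exists_extension_of_le_sublinear
    (LinearPMap.mkSpanSingleton' X (gammaNorm k X) H) (gammaNorm k)
    (fun c hc x => gammaNorm_smul hk c hc x) (gammaNorm_add hk) (by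
      rintro ⟨x, hx⟩
      obtain ⟨t, rfl⟩ := Submodule.mem_span_singleton.1 hx
      rw [LinearPMap.mkSpanSingleton'_apply]
      simp only [RingHom.id_apply, smul_eq_mul]
      rcases le_or_gt t 0 with ht | ht
      · exact (mul_nonpos_of_nonpos_of_nonneg ht (gammaNorm_nonneg _ _)).trans
          (gammaNorm_nonneg _ _)
      · exact (gammaNorm_smul hk t ht X).ge)
  refine ⟨g, ?_, hle⟩
  have := hg ⟨X, Submodule.mem_span_singleton_self X⟩
  exact this.trans (LinearPMap.mkSpanSingleton'_apply_self X (gammaNorm k X) H _)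

/-- the dual of the S(k)-norm is the norm ‖·‖_{γ,k}. -/
theorem dual_SkNorm_eq_gammaNorm {m n k : ℕ} (hk1 : 1 ≤ k) (hk : k ≤ min m n)
    (X : Matrix (Fin m × Fin n) (Fin m × Fin n) ℂ) :
    dualNormM (SkNorm k) X = gammaNorm k X := by
  rw [dualNormM]
  have hub : ∀ r ∈ {r | ∃ W : Matrix (Fin m × Fin n) (Fin m × Fin n) ℂ,
      SkNorm k W ≤ 1 ∧ r = ‖(Wᴴ * X).trace‖}, r ≤ gammaNorm k X := by
    rintro r ⟨W, hW, rfl⟩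
    exact le_csInf (exists_dec hk1 X) fun s hs => trace_le_of_dec hW hs
  refine le_antisymm (Real.sSup_le hub (gammaNorm_nonneg _ _)) ?_
  obtain ⟨g, hgX, hg⟩ := exists_functional hk1 X
  obtain ⟨W, hW⟩ := exists_repr g
  have hW1 : SkNorm k W ≤ 1 := by
    refine Real.sSup_le ?_ zero_le_one
    rintro r ⟨v, w, hv, hw, sv, sw, rfl⟩
    set z := vinner v (W.mulVec w) with hz
    by_cases h0 : z = 0
    · simp [h0]
    have hn : (‖z‖ : ℂ) ≠ 0 := by simpa using h0
    have h1 := (hg ((z / ‖z‖) • ketBra v w)).trans (gammaNorm_le (Dec.single _ hv hw sv sw))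
    rw [hW, Matrix.mul_smul, Matrix.trace_smul, trace_ketBra, ← hz] at h1
    have h2 : (z / ‖z‖) • star z = (‖z‖ : ℂ) := by
      rw [smul_eq_mul, div_mul_eq_mul_div, div_eq_iff hn]
      have := Complex.mul_conj' z
      rw [← pow_two]
      exact this
    rw [h2, Complex.ofReal_re, norm_div, Complex.norm_real, norm_norm,
      div_self (norm_ne_zero_iff.2 h0)] at h1
    exact h1
  refine le_trans ?_ (le_csSup ⟨_, hub⟩ ⟨W, hW1, rfl⟩)
  rw [← hgX, hW]
  exact Complex.re_le_norm _

end Ent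
end

section
/- Fix 1 ≤ k ≤ min(m,n). For every Hermitian Y ∈ M_m ⊗ M_n, the dual norm of r_k^⊗ (computed in the real Hilbert space of Hermitian operators with the Hilbert–Schmidt inner product) equals R_k: that is, r_k^⊗(Y)° = R_k(Y). -/
open scoped Kronecker ComplexOrder
open Matrix

namespace Ent

variable {ι κ : Type*} [Fintype ι] [Fintype κ]

section Aux

variable {m n : ℕ}

/-- The rank-one projections onto unit vectors of Schmidt rank at most `k`. -/
def pureSet (m n k : ℕ) : Set (Matrix (Fin m × Fin n) (Fin m × Fin n) ℂ) :=
  { X | ∃ v : Fin m × Fin n → ℂ, vinner v v = 1 ∧ SchmidtRankLE k v ∧ X = ketBra v v }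

lemma schmidtNumLE_iff (k : ℕ) (ρ : Matrix (Fin m × Fin n) (Fin m × Fin n) ℂ) :
    SchmidtNumLE k ρ ↔ ρ ∈ convexHull ℝ (pureSet m n k) := by
  constructor
  · rintro ⟨N, p, v, h, hp, rfl⟩
    refine (convex_convexHull ℝ (pureSet m n k)).sum_mem (fun i _ => (h i).1) hp ?_
    intro i _
    exact subset_convexHull ℝ _ ⟨v i, (h i).2.1, (h i).2.2, rfl⟩
  · intro h
    rw [convexHull_eq] at h
    obtain ⟨J, t, w, z, hw, hw1, hz, rfl⟩ := h
    rw [Finset.centerMass_eq_of_sum_1 _ _ hw1]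
    have hz' : ∀ i : t, ∃ v : Fin m × Fin n → ℂ,
        vinner v v = 1 ∧ SchmidtRankLE k v ∧ z i = ketBra v v := fun i => hz i i.2
    choose v hv1 hv2 hv3 using hz'
    let e := t.equivFin.symm
    refine ⟨t.card, fun i => w (e i), fun i => v (e i),
      fun i => ⟨hw _ (e i).2, hv1 _, hv2 _⟩, ?_, ?_⟩
    · rw [e.sum_comp (fun i : t => w i), Finset.sum_coe_sort t w, hw1]
    · rw [e.sum_comp (fun i : t => w i • ketBra (v i) (v i)), ← Finset.sum_coe_sort]
      exact Finset.sum_congr rfl fun i _ => by rw [hv3]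

lemma trace_mul_ketBra (W : Matrix (Fin m × Fin n) (Fin m × Fin n) ℂ) (v : Fin m × Fin n → ℂ) :
    (W * ketBra v v).trace = vinner v (W.mulVec v) := by
  rw [ketBra, vinner, Matrix.mul_vecMulVec, Matrix.trace_vecMulVec, dotProduct_comm]

lemma isDensity_of_mem {k : ℕ} {ρ : Matrix (Fin m × Fin n) (Fin m × Fin n) ℂ}
    (h : ρ ∈ convexHull ℝ (pureSet m n k)) : IsDensity ρ := by
  have hc : Convex ℝ {ρ : Matrix (Fin m × Fin n) (Fin m × Fin n) ℂ | IsDensity ρ} := by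
    intro A hA B hB a b ha hb hab
    refine ⟨(hA.1.smul ha).add (hB.1.smul hb), ?_⟩
    rw [Matrix.trace_add, Matrix.trace_smul, Matrix.trace_smul, hA.2, hB.2, ← add_smul, hab,
      one_smul]
  refine convexHull_min ?_ hc h
  rintro X ⟨v, hv, -, rfl⟩
  refine ⟨Matrix.posSemidef_vecMulVec_self_star v, ?_⟩
  have := trace_mul_ketBra 1 v
  simpa [hv] using this

/-- feasible values for `Rk`. -/
def feas (k : ℕ) (Y : Matrix (Fin m × Fin n) (Fin m × Fin n) ℂ) : Set ℝ :=
  { r | ∃ c₁ c₂ : ℝ, ∃ ρ₁ ∈ convexHull ℝ (pureSet m n k), ∃ ρ₂ ∈ convexHull ℝ (pureSet m n k),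
    0 ≤ c₁ ∧ 0 ≤ c₂ ∧ Y = c₁ • ρ₁ - c₂ • ρ₂ ∧ r = c₁ + c₂ }

lemma Rk_eq (k : ℕ) (Y : Matrix (Fin m × Fin n) (Fin m × Fin n) ℂ) : Rk k Y = sInf (feas k Y) := by
  unfold Rk feas
  congr 1
  ext r
  constructor
  · rintro ⟨c₁, c₂, ρ₁, ρ₂, h1, h2, -, -, h3, h4, h5, h6⟩
    exact ⟨c₁, c₂, ρ₁, (schmidtNumLE_iff _ _).1 h3, ρ₂, (schmidtNumLE_iff _ _).1 h4, h1, h2, h5, h6⟩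
  · rintro ⟨c₁, c₂, ρ₁, h3, ρ₂, h4, h1, h2, h5, h6⟩
    exact ⟨c₁, c₂, ρ₁, ρ₂, h1, h2, isDensity_of_mem h3, isDensity_of_mem h4,
      (schmidtNumLE_iff _ _).2 h3, (schmidtNumLE_iff _ _).2 h4, h5, h6⟩

lemma feas_nonneg {k : ℕ} {Y : Matrix (Fin m × Fin n) (Fin m × Fin n) ℂ} {r : ℝ}
    (h : r ∈ feas k Y) : 0 ≤ r := by
  obtain ⟨c₁, c₂, ρ₁, h3, ρ₂, h4, h1, h2, h5, rfl⟩ := h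
  positivity

lemma feas_bdd (k : ℕ) (Y : Matrix (Fin m × Fin n) (Fin m × Fin n) ℂ) : BddBelow (feas k Y) :=
  ⟨0, fun _ h => feas_nonneg h⟩

lemma hull_comb {k : ℕ} {ρ σ : Matrix (Fin m × Fin n) (Fin m × Fin n) ℂ}
    (hρ : ρ ∈ convexHull ℝ (pureSet m n k)) (hσ : σ ∈ convexHull ℝ (pureSet m n k))
    {a b : ℝ} (ha : 0 ≤ a) (hb : 0 ≤ b) :
    ∃ τ ∈ convexHull ℝ (pureSet m n k), a • ρ + b • σ = (a + b) • τ := by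
  rcases eq_or_lt_of_le (add_nonneg ha hb) with h | h
  · have ha0 : a = 0 := by linarith
    have hb0 : b = 0 := by linarith
    exact ⟨ρ, hρ, by simp [ha0, hb0]⟩
  · refine ⟨(a / (a + b)) • ρ + (b / (a + b)) • σ,
      (convex_convexHull ℝ _) hρ hσ (by positivity) (by positivity) (by field_simp), ?_⟩
    rw [smul_add, smul_smul, smul_smul, mul_div_cancel₀ _ h.ne', mul_div_cancel₀ _ h.ne']

lemma feas_add {k : ℕ} {X Y : Matrix (Fin m × Fin n) (Fin m × Fin n) ℂ} {r s : ℝ}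
    (hX : r ∈ feas k X) (hY : s ∈ feas k Y) : r + s ∈ feas k (X + Y) := by
  obtain ⟨c₁, c₂, ρ₁, h3, ρ₂, h4, h1, h2, rfl, rfl⟩ := hX
  obtain ⟨d₁, d₂, σ₁, g3, σ₂, g4, g1, g2, rfl, rfl⟩ := hY
  obtain ⟨τ₁, ht1, e1⟩ := hull_comb h3 g3 h1 g1
  obtain ⟨τ₂, ht2, e2⟩ := hull_comb h4 g4 h2 g2
  refine ⟨c₁ + d₁, c₂ + d₂, τ₁, ht1, τ₂, ht2, by positivity, by positivity, ?_, by ring⟩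
  rw [← e1, ← e2]
  abel

lemma feas_smul {k : ℕ} {X : Matrix (Fin m × Fin n) (Fin m × Fin n) ℂ} {r : ℝ}
    (hX : r ∈ feas k X) {t : ℝ} (ht : 0 ≤ t) : t * r ∈ feas k (t • X) := by
  obtain ⟨c₁, c₂, ρ₁, h3, ρ₂, h4, h1, h2, rfl, rfl⟩ := hX
  refine ⟨t * c₁, t * c₂, ρ₁, h3, ρ₂, h4, by positivity, by positivity, ?_, by ring⟩
  rw [smul_sub, smul_smul, smul_smul]

lemma feas_neg {k : ℕ} {X : Matrix (Fin m × Fin n) (Fin m × Fin n) ℂ} {r : ℝ}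
    (hX : r ∈ feas k X) : r ∈ feas k (-X) := by
  obtain ⟨c₁, c₂, ρ₁, h3, ρ₂, h4, h1, h2, rfl, rfl⟩ := hX
  exact ⟨c₂, c₁, ρ₂, h4, ρ₁, h3, h2, h1, by abel, by ring⟩

lemma feas_pure {k : ℕ} {X : Matrix (Fin m × Fin n) (Fin m × Fin n) ℂ}
    (hX : X ∈ pureSet m n k) : (1 : ℝ) ∈ feas k X :=
  ⟨1, 0, X, subset_convexHull ℝ _ hX, X, subset_convexHull ℝ _ hX, by simp, by simp,
    by simp, by simp⟩

lemma schmidtRankLE_prod {k : ℕ} (hk : 1 ≤ k) (c : ℂ) (a : Fin m → ℂ) (b : Fin n → ℂ) :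
    SchmidtRankLE k (c • prodVec a b) := by
  refine ⟨fun i => if i = ⟨0, hk⟩ then c • a else 0, fun _ => b, ?_⟩
  rw [Finset.sum_eq_single ⟨0, hk⟩]
  · ext p
    simp [prodVec, mul_assoc]
  · intro i _ hi
    ext p
    simp [prodVec, hi]
  · simp

lemma vinner_self (v : Fin m × Fin n → ℂ) : vinner v v = ((∑ p, ‖v p‖ ^ 2 : ℝ) : ℂ) := by
  simp only [vinner, dotProduct, Pi.star_apply]
  push_cast
  exact Finset.sum_congr rfl fun p _ => by
    rw [← Complex.conj_mul']; rfl

lemma pureSet_nonempty {k : ℕ} (hk : 1 ≤ k) (hm : 0 < m) (hn : 0 < n) :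
    (pureSet m n k).Nonempty := by
  refine ⟨_, (1 : ℂ) • prodVec (Pi.single ⟨0, hm⟩ 1) (Pi.single ⟨0, hn⟩ 1), ?_,
    schmidtRankLE_prod hk _ _ _, rfl⟩
  rw [vinner_self, Fintype.sum_prod_type]
  rw [Finset.sum_eq_single ⟨0, hm⟩, Finset.sum_eq_single ⟨0, hn⟩]
  · simp [prodVec]
  · intro i _ hi
    simp [prodVec, hi]
  · simp
  · intro i _ hi
    simp [prodVec, hi]
  · simp

lemma feas_zero {k : ℕ} (hk : 1 ≤ k) (hm : 0 < m) (hn : 0 < n) :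
    (0 : ℝ) ∈ feas k (0 : Matrix (Fin m × Fin n) (Fin m × Fin n) ℂ) := by
  obtain ⟨X, hX⟩ := pureSet_nonempty hk hm hn
  simpa using feas_smul (feas_pure hX) le_rfl

lemma feas_smul' {k : ℕ} {X : Matrix (Fin m × Fin n) (Fin m × Fin n) ℂ}
    (hX : (feas k X).Nonempty) (t : ℝ) : (feas k (t • X)).Nonempty := by
  obtain ⟨r, hr⟩ := hX
  rcases le_total 0 t with h | h
  · exact ⟨_, feas_smul hr h⟩
  · have := feas_neg (feas_smul hr (neg_nonneg.2 h))
    rw [neg_smul, neg_neg] at this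
    exact ⟨_, this⟩

lemma feas_prod {k : ℕ} (hk : 1 ≤ k) (hm : 0 < m) (hn : 0 < n) (a : Fin m → ℂ) (b : Fin n → ℂ) :
    (feas k (ketBra (prodVec a b) (prodVec a b))).Nonempty := by
  set v := prodVec a b with hv
  set s : ℝ := ∑ p, ‖v p‖ ^ 2 with hs
  have hs0 : 0 ≤ s := Finset.sum_nonneg fun _ _ => by positivity
  rcases eq_or_lt_of_le hs0 with h | h
  · have hv0 : v = 0 := by
      ext p
      have := (Finset.sum_eq_zero_iff_of_nonneg (fun p _ => by positivity)).1 h.symm p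
        (Finset.mem_univ p)
      simpa using this
    rw [hv0]
    refine ⟨0, ?_⟩
    have : ketBra (0 : Fin m × Fin n → ℂ) (0 : Fin m × Fin n → ℂ) = 0 := by
      ext; simp [ketBra, Matrix.vecMulVec]
    rw [this]
    exact feas_zero hk hm hn
  · set c : ℝ := (Real.sqrt s)⁻¹ with hc
    have hcs : s * (c * c) = 1 := by
      rw [hc, ← mul_inv, Real.mul_self_sqrt hs0, mul_inv_cancel₀ h.ne']
    have hp : ketBra ((c : ℂ) • v) ((c : ℂ) • v) ∈ pureSet m n k := by
      refine ⟨_, ?_, schmidtRankLE_prod hk _ _ _, rfl⟩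
      rw [vinner_self, ← hv]
      have : ∑ p, ‖((c : ℂ) • v) p‖ ^ 2 = s * (c * c) := by
        rw [hs, Finset.sum_mul]
        refine Finset.sum_congr rfl fun p _ => ?_
        simp only [Pi.smul_apply, smul_eq_mul, norm_mul, Complex.norm_real, mul_pow,
          Real.norm_eq_abs, sq_abs]
        ring
      rw [this, hcs, Complex.ofReal_one]
    have h2 := feas_smul' ⟨1, feas_pure hp⟩ s
    have : s • ketBra ((c : ℂ) • v) ((c : ℂ) • v) = ketBra v v := by
      ext p q
      have h3 : (s : ℂ) * (c * c) = 1 := by exact_mod_cast hcs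
      simp only [ketBra, Matrix.smul_apply, Matrix.vecMulVec_apply, Pi.smul_apply, Pi.star_apply,
        smul_eq_mul, star_mul', Complex.real_smul]
      have h4 : star (c : ℂ) = c := Complex.conj_ofReal c
      rw [h4]
      linear_combination (v p * star (v q)) * h3
    rwa [this] at h2

/-- Hermitian part -/
noncomputable def hp (X : Matrix (Fin m × Fin n) (Fin m × Fin n) ℂ) :
    Matrix (Fin m × Fin n) (Fin m × Fin n) ℂ := (2⁻¹ : ℝ) • (X + Xᴴ)

lemma hp_add (X Y : Matrix (Fin m × Fin n) (Fin m × Fin n) ℂ) : hp (X + Y) = hp X + hp Y := by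
  rw [hp, hp, hp, conjTranspose_add, ← smul_add]
  congr 1
  abel

lemma hp_smul (t : ℝ) (X : Matrix (Fin m × Fin n) (Fin m × Fin n) ℂ) :
    hp (t • X) = t • hp X := by
  rw [hp, hp, conjTranspose_smul, star_trivial, ← smul_add, smul_comm]

lemma hp_of_herm {X : Matrix (Fin m × Fin n) (Fin m × Fin n) ℂ} (h : X.IsHermitian) :
    hp X = X := by
  rw [hp, h.eq, ← two_smul ℝ X, smul_smul]
  norm_num

lemma hp_sum {J : Type*} (t : Finset J) (f : J → Matrix (Fin m × Fin n) (Fin m × Fin n) ℂ) :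
    hp (∑ i ∈ t, f i) = ∑ i ∈ t, hp (f i) := by
  classical
  induction t using Finset.induction_on with
  | empty => simp [hp]
  | insert a s ha ih => rw [Finset.sum_insert ha, Finset.sum_insert ha, hp_add, ih]

lemma feas_sum {k : ℕ} (hk : 1 ≤ k) (hm : 0 < m) (hn : 0 < n) {J : Type*} (t : Finset J)
    (f : J → Matrix (Fin m × Fin n) (Fin m × Fin n) ℂ) (h : ∀ i ∈ t, (feas k (f i)).Nonempty) :
    (feas k (∑ i ∈ t, f i)).Nonempty := by
  refine Finset.sum_induction f (fun X => (feas k X).Nonempty) ?_ ⟨0, feas_zero hk hm hn⟩ h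
  rintro A B ⟨r, hr⟩ ⟨s, hs⟩
  exact ⟨_, feas_add hr hs⟩

lemma ketBra_herm (v : Fin m × Fin n → ℂ) : (ketBra v v).IsHermitian :=
  (Matrix.posSemidef_vecMulVec_self_star v).1

lemma hp_ketBra (z : ℂ) (v : Fin m × Fin n → ℂ) :
    hp (z • ketBra v v) = z.re • ketBra v v := by
  rw [hp, conjTranspose_smul, (ketBra_herm v).eq, ← add_smul]
  have : z + star z = ((2 * z.re : ℝ) : ℂ) := Complex.add_conj z
  rw [this]
  ext p q
  simp only [Matrix.smul_apply, Complex.real_smul, smul_eq_mul]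
  push_cast
  ring

/-- polarization vectors -/
noncomputable def pol {l : ℕ} (i j : Fin l) (s : Fin 4) : Fin l → ℂ :=
  Pi.single i 1 + (Complex.I ^ (s : ℕ)) • Pi.single j 1

lemma pol_sum {l : ℕ} (i j x y : Fin l) :
    ∑ s : Fin 4, (4⁻¹ * Complex.I ^ (s : ℕ)) * (pol i j s x * star (pol i j s y)) =
      (Pi.single i 1 : Fin l → ℂ) x * (Pi.single j 1 : Fin l → ℂ) y := by
  have hr : ∀ (a b : Fin l), star ((Pi.single a 1 : Fin l → ℂ) b) = (Pi.single a 1 : Fin l → ℂ) b := by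
    intro a b
    by_cases h : b = a <;> simp [Pi.single_apply, h]
  simp only [pol, Pi.add_apply, Pi.smul_apply, smul_eq_mul, star_add, star_mul', hr, star_pow]
  have hI : star Complex.I = -Complex.I := Complex.conj_I
  rw [hI]
  generalize (Pi.single i 1 : Fin l → ℂ) x = a
  generalize (Pi.single i 1 : Fin l → ℂ) y = b
  generalize (Pi.single j 1 : Fin l → ℂ) x = c
  generalize (Pi.single j 1 : Fin l → ℂ) y = d
  have h2 : Complex.I ^ 2 = -1 := Complex.I_sq
  have h3 : Complex.I ^ 3 = -Complex.I := Complex.I_pow_three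
  simp only [Fin.sum_univ_four, Fin.val_zero, Fin.val_one, Fin.val_two]
  have h33 : ((3 : Fin 4) : ℕ) = 3 := rfl
  rw [h33]
  simp only [pow_zero, pow_one, neg_pow Complex.I, h2, h3]
  ring_nf
  simp only [h2, h3, Complex.I_pow_four]
  ring

lemma expand (X : Matrix (Fin m × Fin n) (Fin m × Fin n) ℂ) :
    X = ∑ p : Fin m × Fin n, ∑ q : Fin m × Fin n, ∑ s : Fin 4, ∑ t : Fin 4,
      (X p q * ((4⁻¹ * Complex.I ^ (s : ℕ)) * (4⁻¹ * Complex.I ^ (t : ℕ)))) •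
        ketBra (prodVec (pol p.1 q.1 s) (pol p.2 q.2 t))
          (prodVec (pol p.1 q.1 s) (pol p.2 q.2 t)) := by
  ext x y
  simp only [Matrix.sum_apply, Matrix.smul_apply, smul_eq_mul, ketBra, Matrix.vecMulVec_apply,
    Pi.star_apply, prodVec, star_mul']
  have key : ∀ p q : Fin m × Fin n, ∑ s : Fin 4, ∑ t : Fin 4,
      (X p q * ((4⁻¹ * Complex.I ^ (s : ℕ)) * (4⁻¹ * Complex.I ^ (t : ℕ)))) *
        (pol p.1 q.1 s x.1 * pol p.2 q.2 t x.2 *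
          (star (pol p.1 q.1 s y.1) * star (pol p.2 q.2 t y.2))) =
      if p = x then (if q = y then X p q else 0) else 0 := by
    intro p q
    have : ∑ s : Fin 4, ∑ t : Fin 4,
      (X p q * ((4⁻¹ * Complex.I ^ (s : ℕ)) * (4⁻¹ * Complex.I ^ (t : ℕ)))) *
        (pol p.1 q.1 s x.1 * pol p.2 q.2 t x.2 *
          (star (pol p.1 q.1 s y.1) * star (pol p.2 q.2 t y.2))) =
        X p q * ((∑ s : Fin 4, (4⁻¹ * Complex.I ^ (s : ℕ)) *
            (pol p.1 q.1 s x.1 * star (pol p.1 q.1 s y.1))) *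
          (∑ t : Fin 4, (4⁻¹ * Complex.I ^ (t : ℕ)) *
            (pol p.2 q.2 t x.2 * star (pol p.2 q.2 t y.2)))) := by
      rw [Finset.sum_mul_sum, Finset.mul_sum]
      refine Finset.sum_congr rfl fun s _ => ?_
      rw [Finset.mul_sum]
      refine Finset.sum_congr rfl fun t _ => ?_
      ring
    rw [this, pol_sum, pol_sum]
    simp only [Pi.single_apply, Prod.ext_iff]
    by_cases a1 : x.1 = p.1
    · by_cases a2 : x.2 = p.2
      · by_cases a3 : y.1 = q.1
        · by_cases a4 : y.2 = q.2
          · simp [a1, a2, a3, a4]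
          · simp [a4, Ne.symm a4]
        · simp [a3, Ne.symm a3]
      · simp [a2, Ne.symm a2]
    · simp [a1, Ne.symm a1]
  simp only [key]
  simp

lemma feas_hp {k : ℕ} (hk : 1 ≤ k) (hm : 0 < m) (hn : 0 < n)
    (X : Matrix (Fin m × Fin n) (Fin m × Fin n) ℂ) : (feas k (hp X)).Nonempty := by
  rw [expand X]
  simp only [hp_sum, hp_ketBra]
  refine feas_sum hk hm hn _ _ fun p _ => feas_sum hk hm hn _ _ fun q _ =>
    feas_sum hk hm hn _ _ fun s _ => feas_sum hk hm hn _ _ fun t _ => ?_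
  exact feas_smul' (feas_prod hk hm hn _ _) _

lemma prodRad_bdd (k : ℕ) (W : Matrix (Fin m × Fin n) (Fin m × Fin n) ℂ) :
    BddAbove { r | ∃ v : Fin m × Fin n → ℂ, vinner v v = 1 ∧ SchmidtRankLE k v ∧
      r = ‖vinner v (W.mulVec v)‖ } := by
  refine ⟨∑ p, ∑ q, ‖W p q‖, ?_⟩
  rintro r ⟨v, hv, -, rfl⟩
  have hv' : ∑ p, ‖v p‖ ^ 2 = 1 := by
    rw [vinner_self] at hv
    exact_mod_cast hv
  have h1 : ∀ p, ‖v p‖ ≤ 1 := by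
    intro p
    have := Finset.single_le_sum (f := fun p => ‖v p‖ ^ 2) (fun _ _ => by positivity)
      (Finset.mem_univ p)
    rw [hv'] at this
    exact (sq_le_one_iff₀ (norm_nonneg _)).1 this
  simp only [vinner, dotProduct, Matrix.mulVec, Pi.star_apply]
  refine (norm_sum_le _ _).trans (Finset.sum_le_sum fun p _ => ?_)
  rw [norm_mul, norm_star]
  calc _ ≤ 1 * ‖∑ q, W p q * v q‖ := by gcongr; exact h1 p
    _ ≤ ∑ q, ‖W p q‖ := by
      rw [one_mul]
      refine (norm_sum_le _ _).trans (Finset.sum_le_sum fun q _ => ?_)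
      rw [norm_mul]
      exact mul_le_of_le_one_right (norm_nonneg _) (h1 q)

lemma weak {k : ℕ} (W : Matrix (Fin m × Fin n) (Fin m × Fin n) ℂ) (hW : prodRad k W ≤ 1)
    {ρ : Matrix (Fin m × Fin n) (Fin m × Fin n) ℂ} (h : ρ ∈ convexHull ℝ (pureSet m n k)) :
    |((W * ρ).trace).re| ≤ 1 := by
  have hc : Convex ℝ {ρ : Matrix (Fin m × Fin n) (Fin m × Fin n) ℂ |
      |((W * ρ).trace).re| ≤ 1} := by
    intro A hA B hB a b ha hb hab
    simp only [Set.mem_ofPred_eq] at hA hB ⊢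
    rw [Matrix.mul_add, Matrix.mul_smul, Matrix.mul_smul, Matrix.trace_add, Matrix.trace_smul,
      Matrix.trace_smul, Complex.add_re, Complex.smul_re, Complex.smul_re, smul_eq_mul, smul_eq_mul]
    rw [abs_le] at hA hB ⊢
    constructor <;> nlinarith
  refine convexHull_min ?_ hc h
  rintro X ⟨v, hv, hv2, rfl⟩
  simp only [Set.mem_ofPred_eq]
  rw [trace_mul_ketBra]
  exact (Complex.abs_re_le_norm _).trans ((le_csSup (prodRad_bdd k W) ⟨v, hv, hv2, rfl⟩).trans hW)

lemma weak_feas {k : ℕ} (W : Matrix (Fin m × Fin n) (Fin m × Fin n) ℂ) (hW : prodRad k W ≤ 1)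
    {Y : Matrix (Fin m × Fin n) (Fin m × Fin n) ℂ} {r : ℝ} (h : r ∈ feas k Y) :
    |((W * Y).trace).re| ≤ r := by
  obtain ⟨c₁, c₂, ρ₁, h3, ρ₂, h4, h1, h2, rfl, rfl⟩ := h
  have a1 := weak W hW h3
  have a2 := weak W hW h4
  rw [Matrix.mul_sub, Matrix.mul_smul, Matrix.mul_smul, Matrix.trace_sub, Matrix.trace_smul,
      Matrix.trace_smul, Complex.sub_re, Complex.smul_re, Complex.smul_re, smul_eq_mul, smul_eq_mul]
  rw [abs_le] at a1 a2 ⊢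
  constructor <;> nlinarith

lemma repr_functional (g : Matrix (Fin m × Fin n) (Fin m × Fin n) ℂ →ₗ[ℝ] ℝ) :
    ∃ W : Matrix (Fin m × Fin n) (Fin m × Fin n) ℂ, ∀ X, g X = ((W * X).trace).re := by
  refine ⟨Matrix.of fun q p =>
    ⟨g (Matrix.single p q 1), -g (Matrix.single p q Complex.I)⟩, fun X => ?_⟩
  conv_lhs => rw [Matrix.matrix_eq_sum_single X]
  simp only [map_sum, Matrix.trace, Matrix.diag, Matrix.mul_apply, Matrix.of_apply, Complex.re_sum]
  rw [Finset.sum_comm]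
  refine Finset.sum_congr rfl fun q _ => Finset.sum_congr rfl fun p _ => ?_
  have : Matrix.single p q (X p q) = (X p q).re • Matrix.single p q (1 : ℂ) +
      (X p q).im • Matrix.single p q Complex.I := by
    rw [Matrix.smul_single, Matrix.smul_single, ← Matrix.single_add]
    congr 1
    apply Complex.ext <;> simp
  rw [this, map_add, map_smul, map_smul, Complex.mul_re]
  simp only [smul_eq_mul]
  ring

lemma trace_hp (W : Matrix (Fin m × Fin n) (Fin m × Fin n) ℂ)
    {X : Matrix (Fin m × Fin n) (Fin m × Fin n) ℂ} (hX : X.IsHermitian) :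
    ((hp W * X).trace).re = ((W * X).trace).re := by
  have h : (Wᴴ * X).trace = star ((W * X).trace) := by
    rw [← Matrix.trace_conjTranspose, conjTranspose_mul, hX.eq, Matrix.trace_mul_comm]
  have h2 : (star ((W * X).trace)).re = ((W * X).trace).re := Complex.conj_re _
  rw [hp, Matrix.smul_mul, Matrix.trace_smul, Matrix.add_mul, Matrix.trace_add, h, Complex.smul_re,
    Complex.add_re, h2, smul_eq_mul]
  ring

lemma hp_herm (W : Matrix (Fin m × Fin n) (Fin m × Fin n) ℂ) : (hp W).IsHermitian := by
  rw [Matrix.IsHermitian, hp, conjTranspose_smul, conjTranspose_add, conjTranspose_conjTranspose,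
    star_trivial, add_comm]

lemma Rk_nonneg (k : ℕ) (Y : Matrix (Fin m × Fin n) (Fin m × Fin n) ℂ) : 0 ≤ Rk k Y := by
  rw [Rk_eq]
  exact Real.sInf_nonneg fun _ h => feas_nonneg h

lemma Rk_smul (k : ℕ) (Y : Matrix (Fin m × Fin n) (Fin m × Fin n) ℂ) {c : ℝ} (hc : 0 < c) :
    Rk k (c • Y) = c * Rk k Y := by
  rw [Rk_eq, Rk_eq, ← smul_eq_mul, ← Real.sInf_smul_of_nonneg hc.le]
  congr 1
  ext r
  rw [Set.mem_smul_set]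
  constructor
  · intro h
    refine ⟨c⁻¹ * r, ?_, by rw [smul_eq_mul, mul_inv_cancel_left₀ hc.ne']⟩
    have := feas_smul h (inv_nonneg.2 hc.le)
    rwa [inv_smul_smul₀ hc.ne'] at this
  · rintro ⟨s, hs, rfl⟩
    exact feas_smul hs hc.le

lemma strong {k : ℕ} (hk : 1 ≤ k) (hm : 0 < m) (hn : 0 < n)
    (Y : Matrix (Fin m × Fin n) (Fin m × Fin n) ℂ) (hY : Y.IsHermitian) :
    ∃ g : Matrix (Fin m × Fin n) (Fin m × Fin n) ℂ →ₗ[ℝ] ℝ, g Y = Rk k Y ∧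
      ∀ X, g X ≤ Rk k (hp X) := by
  by_cases hY0 : Y = 0
  · refine ⟨0, ?_, fun X => by simpa using Rk_nonneg k _⟩
    subst hY0
    refine le_antisymm (by simpa using Rk_nonneg k _) ?_
    rw [Rk_eq]
    exact csInf_le (feas_bdd _ _) (feas_zero hk hm hn)
  · obtain ⟨g, hg1, hg2⟩ := exists_extension_of_le_sublinear
      (LinearPMap.mkSpanSingleton (σ := RingHom.id ℝ) Y (Rk k Y) hY0) (fun X => Rk k (hp X))
      (fun c hc X => by rw [hp_smul, Rk_smul k _ hc])
      (fun X Z => by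
        simp only [hp_add, Rk_eq]
        refine le_of_forall_pos_le_add fun ε hε => ?_
        obtain ⟨r, hr, hr'⟩ := exists_lt_of_csInf_lt (feas_hp hk hm hn X)
          (lt_add_of_pos_right (sInf (feas k (hp X))) (half_pos hε))
        obtain ⟨s, hs, hs'⟩ := exists_lt_of_csInf_lt (feas_hp hk hm hn Z)
          (lt_add_of_pos_right (sInf (feas k (hp Z))) (half_pos hε))
        have := csInf_le (feas_bdd _ _) (feas_add hr hs)
        linarith)
      (by
        rintro ⟨x, hx⟩
        obtain ⟨c, rfl⟩ := Submodule.mem_span_singleton.1 hx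
        have : (LinearPMap.mkSpanSingleton (σ := RingHom.id ℝ) Y (Rk k Y) hY0) ⟨c • Y, hx⟩
            = c * Rk k Y := by
          exact LinearPMap.mkSpanSingleton'_apply _ _ _ _ _
        rw [this]
        simp only [hp_smul, hp_of_herm hY]
        rcases lt_or_ge 0 c with hc | hc
        · rw [Rk_smul k _ hc]
        · exact (mul_nonpos_of_nonpos_of_nonneg hc (Rk_nonneg k Y)).trans (Rk_nonneg k _))
    refine ⟨g, ?_, hg2⟩
    have := hg1 ⟨Y, Submodule.mem_span_singleton_self Y⟩
    rw [LinearPMap.mkSpanSingleton_apply] at this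
    exact this

end Aux

/-- for Hermitian `Y`, the dual of the product numerical radius `r_k^⊗`, computed
in the real Hilbert space of Hermitian operators with the Hilbert–Schmidt inner product,
equals the robustness norm `R_k`. -/
theorem dual_prodRad_eq_Rk {m n k : ℕ} (hk1 : 1 ≤ k) (hk : k ≤ min m n)
    (Y : Matrix (Fin m × Fin n) (Fin m × Fin n) ℂ) (hY : Y.IsHermitian) :
    dualNormHerm (prodRad k) Y = Rk k Y := by
  have hm : 0 < m := by have := le_min_iff.1 hk; omega
  have hn : 0 < n := by have := le_min_iff.1 hk; omega
  have hne : (feas k Y).Nonempty := by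
    have := feas_hp hk1 hm hn Y
    rwa [hp_of_herm hY] at this
  have hub : ∀ r ∈ { r | ∃ W : Matrix (Fin m × Fin n) (Fin m × Fin n) ℂ,
      W.IsHermitian ∧ prodRad k W ≤ 1 ∧ r = |((W * Y).trace).re| }, r ≤ Rk k Y := by
    rintro r ⟨W, -, hW, rfl⟩
    rw [Rk_eq]
    exact le_csInf hne fun s hs => weak_feas W hW hs
  refine le_antisymm ?_ ?_
  · exact Real.sSup_le hub (Rk_nonneg k Y)
  · obtain ⟨g, hg1, hg2⟩ := strong hk1 hm hn Y hY
    obtain ⟨W, hW⟩ := repr_functional g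
    refine le_csSup ⟨_, hub⟩ ⟨hp W, hp_herm W, ?_, ?_⟩
    · refine Real.sSup_le ?_ zero_le_one
      rintro r ⟨v, hv, hv2, rfl⟩
      have him : (vinner v ((hp W).mulVec v)).im = 0 :=
        (hp_herm W).im_star_dotProduct_mulVec_self v
      have hre : vinner v ((hp W).mulVec v) = ((g (ketBra v v) : ℝ) : ℂ) := by
        apply Complex.ext
        · rw [← trace_mul_ketBra, trace_hp W (ketBra_herm v), hW, Complex.ofReal_re]
        · rw [him, Complex.ofReal_im]
      rw [hre, Complex.norm_real, Real.norm_eq_abs, abs_le]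
      have hf := feas_pure (k := k) ⟨v, hv, hv2, rfl⟩
      have h1 := hg2 (ketBra v v)
      have h2 := hg2 (-ketBra v v)
      rw [hp_of_herm (ketBra_herm v), Rk_eq] at h1
      rw [hp_of_herm (ketBra_herm v).neg, Rk_eq, map_neg] at h2
      have h3 := csInf_le (feas_bdd _ _) hf
      have h4 := csInf_le (feas_bdd _ _) (feas_neg hf)
      constructor <;> linarith
    · rw [trace_hp W hY, ← hW, hg1, abs_of_nonneg (Rk_nonneg k Y)]

end Ent
end

section
/- Fix 1 ≤ k ≤ min(2m,n). For every Hermitian X ∈ M_m ⊗ M_n, r_k^⊗(X) = inf{ s ∈ ℝ : the block operator [[s·I_m⊗I_n, X],[X†, s·I_m⊗I_n]] ∈ M_{2m} ⊗ M_n is k-block positive }, where the 2×2 block matrix is regarded as an element of M₂ ⊗ M_m ⊗ M_n ≅ M_{2m} ⊗ M_n and k-block positivity is taken with respect to the bipartition ℂ^{2m} ⊗ ℂ^n. -/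
open scoped Kronecker ComplexOrder
open Matrix

namespace Ent

variable {ι κ : Type*} [Fintype ι] [Fintype κ]

/-- The block operator [[s·I, X],[Xᴴ, s·I]] ∈ M₂ ⊗ M_m ⊗ M_n ≅ M_{2m} ⊗ M_n. -/
noncomputable def blockOp {m n : ℕ} (s : ℝ) (X : Matrix (Fin m × Fin n) (Fin m × Fin n) ℂ) :
    Matrix ((Fin 2 × Fin m) × Fin n) ((Fin 2 × Fin m) × Fin n) ℂ :=
  fun p q =>
    if p.1.1 = q.1.1 then (if (p.1.2, p.2) = (q.1.2, q.2) then (s : ℂ) else 0)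
    else if p.1.1 = 0 then X (p.1.2, p.2) (q.1.2, q.2)
    else Xᴴ (p.1.2, p.2) (q.1.2, q.2)

lemma aux_smul_q (X : Matrix ι ι ℂ) (c : ℝ) (v : ι → ℂ) :
    vinner ((c : ℂ) • v) (X.mulVec ((c : ℂ) • v)) = ((c ^ 2 : ℝ) : ℂ) * vinner v (X.mulVec v) := by
  simp only [vinner, Matrix.mulVec_smul, star_smul, smul_dotProduct, dotProduct_smul, smul_eq_mul]
  simp
  ring

lemma aux_smul_n (c : ℝ) (v : ι → ℂ) :
    vinner ((c : ℂ) • v) ((c : ℂ) • v) = ((c ^ 2 : ℝ) : ℂ) * vinner v v := by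
  simp only [vinner, star_smul, smul_dotProduct, dotProduct_smul, smul_eq_mul]
  simp
  ring

lemma aux_self (v : ι → ℂ) : vinner v v = ((∑ i, ‖v i‖ ^ 2 : ℝ) : ℂ) := by
  simp only [vinner, dotProduct, Pi.star_apply]
  push_cast
  refine Finset.sum_congr rfl fun i _ => ?_
  exact Complex.conj_mul' (v i)

lemma aux_polar (X : Matrix ι ι ℂ) (x y : ι → ℂ) :
    vinner x (X.mulVec y) + vinner y (X.mulVec x) =
      (vinner (x + y) (X.mulVec (x + y)) - vinner (x - y) (X.mulVec (x - y))) / 2 := by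
  simp only [vinner, Matrix.mulVec_add, Matrix.mulVec_sub, star_add, star_sub, add_dotProduct,
    sub_dotProduct, dotProduct_add, dotProduct_sub]
  ring

lemma aux_par (x y : ι → ℂ) :
    vinner (x + y) (x + y) + vinner (x - y) (x - y) = 2 * (vinner x x + vinner y y) := by
  simp only [vinner, star_add, star_sub, add_dotProduct,
    sub_dotProduct, dotProduct_add, dotProduct_sub]
  ring

lemma aux_real (X : Matrix ι ι ℂ) (hX : X.IsHermitian) (v : ι → ℂ) :
    ‖vinner v (X.mulVec v)‖ = |(vinner v (X.mulVec v)).re| := by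
  have h : star (vinner v (X.mulVec v)) = vinner v (X.mulVec v) := by
    simp only [vinner]
    rw [← Matrix.star_dotProduct_star, star_star, Matrix.star_mulVec, hX.eq,
      Matrix.dotProduct_mulVec]
  have h2 := Complex.conj_eq_iff_re.mp h
  rw [← h2]
  simp

lemma aux_smul_sr {k : ℕ} (c : ℂ) {v : ι × κ → ℂ} (h : SchmidtRankLE k v) :
    SchmidtRankLE k (c • v) := by
  obtain ⟨a, b, rfl⟩ := h
  refine ⟨fun i => c • a i, b, ?_⟩
  rw [Finset.smul_sum]
  refine Finset.sum_congr rfl fun i _ => ?_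
  ext p
  simp [prodVec, mul_assoc]

lemma aux_bdd (k : ℕ) (X : Matrix (ι × κ) (ι × κ) ℂ) :
    BddAbove { r | ∃ v : ι × κ → ℂ, vinner v v = 1 ∧ SchmidtRankLE k v ∧
      r = ‖vinner v (X.mulVec v)‖ } := by
  refine ⟨∑ i, ∑ j, ‖X i j‖, ?_⟩
  rintro r ⟨v, hv, -, rfl⟩
  have hv1 : ∀ i, ‖v i‖ ≤ 1 := by
    intro i
    rw [aux_self] at hv
    have hv' : (∑ i, ‖v i‖ ^ 2 : ℝ) = 1 := by exact_mod_cast hv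
    have := Finset.single_le_sum (f := fun i => ‖v i‖ ^ 2) (fun i _ => sq_nonneg _)
      (Finset.mem_univ i)
    have h3 : ‖v i‖ ^ 2 ≤ 1 := by simpa [hv'] using this
    nlinarith [norm_nonneg (v i)]
  simp only [vinner, dotProduct, Matrix.mulVec]
  refine (norm_sum_le _ _).trans (Finset.sum_le_sum fun i _ => ?_)
  rw [norm_mul]
  have h1 : ‖(star v) i‖ ≤ 1 := by simpa using hv1 i
  refine (mul_le_of_le_one_left (norm_nonneg _) h1).trans ?_
  refine (norm_sum_le _ _).trans (Finset.sum_le_sum fun j _ => ?_)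
  rw [norm_mul]
  exact mul_le_of_le_one_right (norm_nonneg _) (hv1 j)

lemma aux_hom (k : ℕ) (X : Matrix (ι × κ) (ι × κ) ℂ) (w : ι × κ → ℂ)
    (hw : SchmidtRankLE k w) :
    ‖vinner w (X.mulVec w)‖ ≤ prodRad k X * (vinner w w).re := by
  have hs := aux_self w
  set N : ℝ := ∑ i, ‖w i‖ ^ 2 with hN
  have hN0 : 0 ≤ N := Finset.sum_nonneg fun i _ => sq_nonneg _
  rw [hs, Complex.ofReal_re]
  rcases hN0.eq_or_lt with h | h
  · have : w = 0 := by
      ext i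
      have := (Finset.sum_eq_zero_iff_of_nonneg (fun i _ => sq_nonneg ‖w i‖)).1 h.symm i
        (Finset.mem_univ i)
      simpa using this
    subst this
    simp [vinner, ← h]
  · have hc : ((Real.sqrt N)⁻¹) ^ 2 = N⁻¹ := by rw [inv_pow, Real.sq_sqrt hN0]
    have := le_csSup (aux_bdd k X) ⟨(((Real.sqrt N)⁻¹ : ℝ) : ℂ) • w, by
      rw [aux_smul_n, hs, hc, ← Complex.ofReal_mul, inv_mul_cancel₀ h.ne', Complex.ofReal_one],
      aux_smul_sr _ hw, rfl⟩
    rw [aux_smul_q, hc, norm_mul, Complex.norm_real, Real.norm_of_nonneg (inv_nonneg.2 hN0)] at this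
    rw [inv_mul_le_iff₀ h] at this
    rw [mul_comm]
    exact this

/-- The two components of a block vector. -/
def comp {m n : ℕ} (t : Fin 2) (v : (Fin 2 × Fin m) × Fin n → ℂ) : Fin m × Fin n → ℂ :=
  fun p => v ((t, p.1), p.2)

lemma aux_norm_block {m n : ℕ} (v : (Fin 2 × Fin m) × Fin n → ℂ) :
    vinner v v = vinner (comp 0 v) (comp 0 v) + vinner (comp 1 v) (comp 1 v) := by
  simp [vinner, dotProduct, comp, Fintype.sum_prod_type, Fin.sum_univ_two]

lemma aux_mulVec0 {m n : ℕ} (s : ℝ) (X : Matrix (Fin m × Fin n) (Fin m × Fin n) ℂ)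
    (v : (Fin 2 × Fin m) × Fin n → ℂ) :
    comp 0 ((blockOp s X).mulVec v) = (s : ℂ) • comp 0 v + X.mulVec (comp 1 v) := by
  ext ⟨i, j⟩
  simp [comp, blockOp, Matrix.mulVec, dotProduct, Fintype.sum_prod_type, Fin.sum_univ_two,
    ite_and]

lemma aux_mulVec1 {m n : ℕ} (s : ℝ) (X : Matrix (Fin m × Fin n) (Fin m × Fin n) ℂ)
    (v : (Fin 2 × Fin m) × Fin n → ℂ) :
    comp 1 ((blockOp s X).mulVec v) = (s : ℂ) • comp 1 v + Xᴴ.mulVec (comp 0 v) := by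
  ext ⟨i, j⟩
  simp [comp, blockOp, Matrix.mulVec, dotProduct, Fintype.sum_prod_type, Fin.sum_univ_two,
    ite_and, add_comm]

lemma aux_inner_block {m n : ℕ} (v w : (Fin 2 × Fin m) × Fin n → ℂ) :
    vinner v w = vinner (comp 0 v) (comp 0 w) + vinner (comp 1 v) (comp 1 w) := by
  simp [vinner, dotProduct, comp, Fintype.sum_prod_type, Fin.sum_univ_two]

lemma aux_block {m n : ℕ} (s : ℝ) (X : Matrix (Fin m × Fin n) (Fin m × Fin n) ℂ)
    (hX : X.IsHermitian) (v : (Fin 2 × Fin m) × Fin n → ℂ) :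
    vinner v ((blockOp s X).mulVec v) = s * vinner v v +
      (vinner (comp 0 v + comp 1 v) (X.mulVec (comp 0 v + comp 1 v)) -
        vinner (comp 0 v - comp 1 v) (X.mulVec (comp 0 v - comp 1 v))) / 2 := by
  rw [← aux_polar, aux_inner_block, aux_mulVec0, aux_mulVec1, hX.eq, aux_inner_block v v]
  simp only [vinner, dotProduct_add, dotProduct_smul, smul_eq_mul]
  ring

lemma aux_sr_block {m n k : ℕ} (c : ℂ) {v : (Fin 2 × Fin m) × Fin n → ℂ}
    (h : SchmidtRankLE k v) : SchmidtRankLE k (comp 0 v + c • comp 1 v) := by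
  obtain ⟨a, b, rfl⟩ := h
  refine ⟨fun i p => a i (0, p) + c * a i (1, p), b, ?_⟩
  ext p
  simp only [comp, prodVec, Pi.add_apply, Pi.smul_apply, Finset.sum_apply, smul_eq_mul,
    Finset.mul_sum, ← Finset.sum_add_distrib]
  exact Finset.sum_congr rfl fun i _ => by ring

/-- The block vector `(v, c v)`. -/
def dbl {m n : ℕ} (c : ℂ) (v : Fin m × Fin n → ℂ) : (Fin 2 × Fin m) × Fin n → ℂ :=
  fun p => (if p.1.1 = 0 then 1 else c) * v (p.1.2, p.2)

lemma aux_sr_dbl {m n k : ℕ} (c : ℂ) {v : Fin m × Fin n → ℂ}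
    (h : SchmidtRankLE k v) : SchmidtRankLE k (dbl c v) := by
  obtain ⟨a, b, rfl⟩ := h
  refine ⟨fun i p => (if p.1 = 0 then 1 else c) * a i p.2, b, ?_⟩
  ext p
  simp only [dbl, prodVec, Finset.sum_apply, Finset.mul_sum, mul_assoc]

lemma comp0_dbl {m n : ℕ} (c : ℂ) (v : Fin m × Fin n → ℂ) : comp 0 (dbl c v) = v := by
  ext p; simp [comp, dbl]

lemma comp1_dbl {m n : ℕ} (c : ℂ) (v : Fin m × Fin n → ℂ) : comp 1 (dbl c v) = c • v := by
  ext p; simp [comp, dbl]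

lemma aux_nonempty {m n k : ℕ} (hk1 : 1 ≤ k) (hm : 0 < m) (hn : 0 < n) :
    ∃ v : Fin m × Fin n → ℂ, vinner v v = 1 ∧ SchmidtRankLE k v := by
  refine ⟨prodVec (Pi.single ⟨0, hm⟩ 1) (Pi.single ⟨0, hn⟩ 1), ?_, ?_⟩
  · simp [vinner, dotProduct, prodVec, Fintype.sum_prod_type, Pi.single_apply]
  · refine ⟨fun i => if i = ⟨0, hk1⟩ then Pi.single ⟨0, hm⟩ 1 else 0,
      fun _ => Pi.single ⟨0, hn⟩ 1, ?_⟩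
    rw [Finset.sum_eq_single ⟨0, hk1⟩]
    · simp
    · intro i _ hi
      ext p
      simp [prodVec, hi]
    · simp

lemma aux_hom_block {m n k : ℕ} (s : ℝ) (X : Matrix (Fin m × Fin n) (Fin m × Fin n) ℂ)
    (h : KBlockPos k (blockOp s X)) (hX : X.IsHermitian) (v : Fin m × Fin n → ℂ)
    (hv : vinner v v = 1) (hs : SchmidtRankLE k v) : ‖vinner v (X.mulVec v)‖ ≤ s := by
  have hc : ((Real.sqrt 2)⁻¹) ^ 2 = (1 / 2 : ℝ) := by
    rw [inv_pow, Real.sq_sqrt (by norm_num)]; norm_num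
  have key : ∀ c : ℂ, vinner (c • v) (c • v) = 1 →
      0 ≤ (vinner (dbl c v) ((blockOp s X).mulVec (dbl c v))).re := by
    intro c hcv
    have := h (((Real.sqrt 2)⁻¹ : ℝ) • dbl c v : _) (by
      have := aux_smul_n (Real.sqrt 2)⁻¹ (dbl c v)
      rw [Complex.coe_smul] at this
      rw [this, aux_inner_block, comp0_dbl, comp1_dbl, hcv, hv, hc]
      norm_num) (by
      have := aux_smul_sr (((Real.sqrt 2)⁻¹ : ℝ) : ℂ) (aux_sr_dbl c hs)
      rwa [Complex.coe_smul] at this)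
    have h2 := aux_smul_q (blockOp s X) (Real.sqrt 2)⁻¹ (dbl c v)
    rw [Complex.coe_smul] at h2
    rw [h2, hc, Complex.re_ofReal_mul] at this
    linarith
  rw [aux_real X hX, abs_le]
  have k1 := key 1 (by simpa using hv)
  have k2 := key (-1) (by simpa [vinner] using hv)
  rw [aux_inner_block, aux_mulVec0, aux_mulVec1, hX.eq, comp0_dbl, comp1_dbl] at k1 k2
  simp only [vinner, Matrix.mulVec_smul, Matrix.mulVec_neg, dotProduct_add, dotProduct_smul,
    star_smul, smul_dotProduct, neg_smul, one_smul, star_neg, neg_dotProduct, dotProduct_neg,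
    smul_eq_mul, smul_neg, neg_neg] at k1 k2
  rw [vinner] at hv
  rw [hv] at k1 k2
  simp at k1 k2
  simp only [vinner]
  constructor <;> linarith

theorem prodRad_eq_inf_blockOp {m n k : ℕ} (hk1 : 1 ≤ k) (hk : k ≤ min (2 * m) n)
    (X : Matrix (Fin m × Fin n) (Fin m × Fin n) ℂ) (hX : X.IsHermitian) :
    prodRad k X = sInf { s : ℝ | KBlockPos k (blockOp s X) } := by
  have hset : { s : ℝ | KBlockPos k (blockOp s X) } = Set.Ici (prodRad k X) := by
    ext s
    simp only [Set.mem_setOf_eq, Set.mem_Ici]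
    constructor
    · intro h
      refine csSup_le ?_ ?_
      · obtain ⟨v, h1, h2⟩ := aux_nonempty (m := m) (n := n) hk1 (by omega) (by omega)
        exact ⟨_, v, h1, h2, rfl⟩
      · rintro r ⟨v, h1, h2, rfl⟩
        exact aux_hom_block s X h hX v h1 h2
    · intro h v hv hs
      have p1 := aux_hom k X _ (aux_sr_block 1 hs)
      have p2 := aux_hom k X _ (aux_sr_block (-1) hs)
      simp only [one_smul, neg_smul, ← sub_eq_add_neg] at p1 p2
      rw [aux_real X hX] at p1 p2
      have p1' := (abs_le.1 p1).1
      have p2' := (abs_le.1 p2).2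
      have hp := aux_par (comp 0 v) (comp 1 v)
      rw [← aux_inner_block, hv] at hp
      have hp' := congrArg Complex.re hp
      simp at hp'
      rw [aux_block s X hX, hv]
      simp
      have hq := congrArg (fun t => prodRad k X * t) hp'
      simp only [mul_add] at hq
      linarith
  rw [hset, csInf_Ici]

end Ent
end
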